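/- arXiv:2504.21455 — 3 statements merged into one kernel-verified Lean document; each statement's English description precedes it below -/
import Mathlib

section
/- For all real numbers r, s, t with 0 ≤ r, 0 ≤ s, r + s ≤ t and r < t, one has −1 ≤ log⁺(r+s) − ( ((t−(r+s))/(t−r))·log⁺ r + (s/(t−r))·log⁺ t ) ≤ 1 + log⁺( min(s, t−r−s) ). -/
open Real

/-- `log⁺ x = log (max x 1)`. -/
noncomputable def logPlus (x : ℝ) : ℝ := Real.log (max x 1)

/-- Elementary interpolation inequality for the logarithmic barrier curve
(Lemma 2.10 of the paper / Lemma 3.3 of Cortines–Hartung–Louidor). -/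
theorem logPlus_interpolation (r s t : ℝ) (hr : 0 ≤ r) (hs : 0 ≤ s)
    (hrst : r + s ≤ t) (hrt : r < t) :
    -1 ≤ logPlus (r + s) -
        ((t - (r + s)) / (t - r) * logPlus r + s / (t - r) * logPlus t) ∧
    logPlus (r + s) -
        ((t - (r + s)) / (t - r) * logPlus r + s / (t - r) * logPlus t) ≤
      1 + logPlus (min s (t - r - s)) := by
  have hd : 0 < t - r := by linarith
  obtain ⟨l, hl⟩ : ∃ l, l = s / (t - r) := ⟨_, rfl⟩
  have hl0 : 0 ≤ l := by rw [hl]; positivity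
  have hl1 : l ≤ 1 := by rw [hl, div_le_one hd]; linarith
  have hls : l * (t - r) = s := by rw [hl]; field_simp
  have h1l : (t - (r + s)) / (t - r) = 1 - l := by rw [hl]; field_simp; ring
  rw [h1l, ← hl]
  unfold logPlus
  have hR : 1 ≤ max r 1 := le_max_right _ _
  have hU : 1 ≤ max (r + s) 1 := le_max_right _ _
  have hT : 1 ≤ max t 1 := le_max_right _ _
  have hRU : max r 1 ≤ max (r + s) 1 := max_le_max (by linarith) le_rfl
  have hUT : max (r + s) 1 ≤ max t 1 := max_le_max hrst le_rfl
  have hUR : max (r + s) 1 ≤ max r 1 * (1 + s) := by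
    have := le_max_left r 1
    apply max_le <;> nlinarith
  have hlT : l * max t 1 ≤ max (r + s) 1 := by
    rcases le_total t 1 with h | h
    · rw [max_eq_right h]; linarith
    · rw [max_eq_left h]
      have : l * t ≤ r + s := by nlinarith
      exact this.trans (le_max_left _ _)
  have eUR : log (max (r + s) 1) ≤ log (max r 1) + log (1 + s) := by
    rw [← Real.log_mul (by positivity) (by positivity)]
    exact Real.log_le_log (by positivity) hUR
  have eRU := Real.log_le_log (by positivity) hRU
  have eUT := Real.log_le_log (by positivity) hUT
  generalize max r 1 = R at *
  generalize max (r + s) 1 = U at *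
  generalize max t 1 = T at *
  have hU0 : 0 < U := by linarith
  have hT0 : 0 < T := by linarith
  constructor
  · have h1 : log T - log U ≤ T / U := by
      rw [← Real.log_div hT0.ne' hU0.ne']
      exact Real.log_le_self (by positivity)
    have h2 : l * (T / U) ≤ 1 := by
      rw [← mul_div_assoc, div_le_one hU0]; exact hlT
    have h3 := mul_le_mul_of_nonneg_left h1 hl0
    nlinarith
  · have key : (1 - l) * log U - (1 - l) * log R ≤ (1 - l) * log (1 + s) := by
      have := mul_le_mul_of_nonneg_left eUR (sub_nonneg.2 hl1)
      linarith
    have h4 := mul_le_mul_of_nonneg_left eUT hl0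
    have gen : ∀ M, 1 ≤ M → (1 - l) * s ≤ M → (1 - l) * log (1 + s) ≤ 1 + log M := by
      intro M hM h
      have hM0 : 0 < M := by linarith
      have a : log (1 + s) - log M ≤ (1 + s) / M - 1 := by
        rw [← Real.log_div (by positivity) hM0.ne']
        exact Real.log_le_sub_one_of_pos (by positivity)
      have b : (1 - l) * ((1 + s) / M - 1) ≤ 1 := by
        have : (1 - l) * ((1 + s) / M - 1) = ((1 - l) * (1 + s - M)) / M := by field_simp
        rw [this, div_le_one hM0]
        nlinarith
      have c := mul_le_mul_of_nonneg_left a (sub_nonneg.2 hl1)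
      have d := Real.log_nonneg hM
      nlinarith
    have := gen (max (min s (t - r - s)) 1) (le_max_right _ _) (by
      apply le_trans _ (le_max_left _ _)
      apply le_min
      · nlinarith
      · nlinarith)
    linarith
end

section
/- For all λ > 0 and ρ > 0, the function z ↦ (1 − e^{−λz} − λz·1_{z≤ρ})·z^{−2} is absolutely integrable on (0,∞) with respect to Lebesgue measure, and ∫₀^∞ (1 − e^{−λz} − λz·1_{z≤ρ}) z^{−2} dz = −λ log λ − (log ρ − 1 + γ)·λ, where γ denotes the Euler–Mascheroni constant. -/
open MeasureTheory Real Set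

open Filter Topology Asymptotics in
lemma aux_log_exp : IntegrableOn (fun t : ℝ => Real.log t * Real.exp (-t)) (Ioi 0) volume ∧
    ∫ t in Ioi (0:ℝ), Real.log t * Real.exp (-t) = -Real.eulerMascheroniConstant := by
  have key := mellin_hasDerivAt_of_isBigO_rpow (E := ℂ) (a := 2) (b := 0) (s := 1)
    (f := fun x : ℝ => ((Real.exp (-x) : ℝ) : ℂ)) (by
      refine (Continuous.continuousOn ?_).locallyIntegrableOn measurableSet_Ioi
      fun_prop) (by
      rw [← isBigO_norm_left]
      simp_rw [Complex.norm_real, isBigO_norm_left]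
      simpa only [neg_one_mul] using (isLittleO_exp_neg_mul_rpow_atTop zero_lt_one _).isBigO)
      (by norm_num) (by
      simp_rw [neg_zero, Real.rpow_zero]
      refine isBigO_const_of_tendsto (?_ : Tendsto _ _ (𝓝 (1 : ℂ))) one_ne_zero
      rw [(by simp : (1 : ℂ) = ((Real.exp (-0) : ℝ) : ℂ))]
      have : Continuous (fun x : ℝ => ((Real.exp (-x) : ℝ) : ℂ)) := by fun_prop
      exact this.continuousWithinAt) (by norm_num)
  have e : (fun t : ℝ => (t : ℂ) ^ ((1:ℂ) - 1) • (Real.log t • ((Real.exp (-t) : ℝ) : ℂ)))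
      = fun t : ℝ => ((Real.log t * Real.exp (-t) : ℝ) : ℂ) := by
    funext t; simp
  obtain ⟨k1, k2⟩ := key
  constructor
  · unfold MellinConvergent at k1
    rw [e] at k1
    exact k1.re
  · rw [← Complex.GammaIntegral_eq_mellin] at k2
    unfold mellin at k2
    rw [e, integral_complex_ofReal] at k2
    have h3 : HasDerivAt Complex.Gamma (-(Real.eulerMascheroniConstant : ℂ)) 1 :=
      Complex.hasDerivAt_Gamma_one
    have h4 := h3.congr_of_eventuallyEq (f₁ := Complex.GammaIntegral) (by
      have : {s : ℂ | 0 < s.re} ∈ 𝓝 (1:ℂ) :=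
        (isOpen_lt continuous_const Complex.continuous_re).mem_nhds (by simp)
      filter_upwards [this] with s hs
      exact (Complex.Gamma_eq_integral hs).symm)
    have := k2.unique h4
    exact_mod_cast this

lemma aux_scaled (l : ℝ) (hl : 0 < l) :
    IntegrableOn (fun t : ℝ => l ^ 2 * (Real.exp (-(l * t)) * Real.log t)) (Ioi 0) volume ∧
    ∫ t in Ioi (0:ℝ), l ^ 2 * (Real.exp (-(l * t)) * Real.log t)
      = -l * (Real.eulerMascheroniConstant + Real.log l) := by
  obtain ⟨h1, h2⟩ := aux_log_exp
  have h3 : IntegrableOn (fun t : ℝ => Real.exp (-t)) (Ioi 0) volume := integrableOn_exp_neg_Ioi 0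
  have h4 : IntegrableOn (fun t : ℝ => Real.log t * Real.exp (-t) - Real.log l * Real.exp (-t))
    (Ioi 0) volume := h1.sub (h3.const_mul _)
  have h5 : ∫ t in Ioi (0:ℝ), (Real.log t * Real.exp (-t) - Real.log l * Real.exp (-t))
      = -Real.eulerMascheroniConstant - Real.log l := by
    rw [integral_sub h1 (h3.const_mul _), integral_const_mul, h2, integral_exp_neg_Ioi]
    simp
  have e : ∀ t ∈ Ioi (0:ℝ), l ^ 2 * (Real.log (l * t) * Real.exp (-(l * t))
      - Real.log l * Real.exp (-(l * t))) = l ^ 2 * (Real.exp (-(l * t)) * Real.log t) := by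
    intro t ht
    rw [Real.log_mul hl.ne' (ne_of_gt ht)]; ring
  have h6 := (integrableOn_Ioi_comp_mul_left_iff _ 0 hl).2 (by simpa using h4)
  have h7 := integral_comp_mul_left_Ioi
    (fun t => Real.log t * Real.exp (-t) - Real.log l * Real.exp (-t)) 0 hl
  rw [mul_zero, h5] at h7
  constructor
  · exact IntegrableOn.congr_fun (h6.const_mul (l ^ 2)) e measurableSet_Ioi
  · rw [← setIntegral_congr_fun measurableSet_Ioi e, integral_const_mul, h7, smul_eq_mul]
    field_simp
    ring

lemma aux_bounds (x : ℝ) (hx : 0 ≤ x) :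
    0 ≤ Real.exp (-x) - 1 + x ∧ Real.exp (-x) - 1 + x ≤ x ^ 2 ∧ Real.exp (-x) ≤ 1 := by
  have a := Real.add_one_le_exp (-x)
  have b := Real.add_one_le_exp x
  have c : Real.exp (-x) * Real.exp x = 1 := by rw [← Real.exp_add]; simp
  have d := Real.exp_pos (-x)
  refine ⟨by linarith, ?_, by simpa using hx⟩
  have : Real.exp (-x) * (x + 1) ≤ 1 := by nlinarith
  nlinarith

open Filter Topology in
theorem aux_deriv (l z c : ℝ) (hz : 0 < z) :
    HasDerivAt (fun z => -((1 - Real.exp (-(l * z)) - c * (l * z)) / z)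
      + l * (Real.exp (-(l * z)) - c) * Real.log z)
      ((1 - Real.exp (-(l * z)) - c * (l * z)) * z ^ (-2 : ℝ)
        - l ^ 2 * (Real.exp (-(l * z)) * Real.log z)) z := by
  have hlz : HasDerivAt (fun z : ℝ => l * z) l z := by
    simpa using (hasDerivAt_id z).const_mul l
  have hE : HasDerivAt (fun z : ℝ => Real.exp (-(l * z))) (Real.exp (-(l * z)) * (-l)) z :=
    hlz.neg.exp
  have h1 := (((hE.const_sub 1).sub (hlz.const_mul c)).div (hasDerivAt_id z) hz.ne').neg
  have h2 := ((hE.sub_const c).const_mul l).mul (Real.hasDerivAt_log hz.ne')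
  refine (h1.add h2).congr_deriv ?_
  rw [show (-2 : ℝ) = -((2 : ℕ) : ℝ) by norm_num, Real.rpow_neg hz.le, Real.rpow_natCast]
  simp only [id, Pi.sub_apply]
  field_simp
  ring

theorem aux_int0 (l ρ : ℝ) (hl : 0 < l) :
    IntegrableOn (fun z : ℝ => (1 - Real.exp (-(l * z)) - 1 * (l * z)) * z ^ (-2 : ℝ))
      (Ioc 0 ρ) volume := by
  refine Measure.integrableOn_of_bounded (M := l ^ 2) (by simp) ?_ ?_
  · exact Measurable.aestronglyMeasurable (by fun_prop)
  · refine (ae_restrict_mem measurableSet_Ioc).mono fun z hz => ?_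
    have hz0 : 0 < z := hz.1
    rw [show (-2 : ℝ) = -((2 : ℕ) : ℝ) by norm_num, Real.rpow_neg hz0.le, Real.rpow_natCast]
    obtain ⟨a, b, -⟩ := aux_bounds (l * z) (by positivity)
    rw [← div_eq_mul_inv, Real.norm_eq_abs, abs_div, abs_of_nonpos (by linarith),
      abs_of_nonneg (by positivity), div_le_iff₀ (by positivity)]
    nlinarith

theorem aux_int1 (l ρ : ℝ) (hl : 0 < l) (hρ : 0 < ρ) :
    IntegrableOn (fun z : ℝ => (1 - Real.exp (-(l * z)) - 0 * (l * z)) * z ^ (-2 : ℝ))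
      (Ioi ρ) volume := by
  refine Integrable.mono' (integrableOn_Ioi_rpow_of_lt (a := -2) (by norm_num) hρ) ?_ ?_
  · exact Measurable.aestronglyMeasurable (by fun_prop)
  · refine (ae_restrict_mem measurableSet_Ioi).mono fun z hz => ?_
    have hz0 : 0 < z := hρ.trans hz
    obtain ⟨-, -, c⟩ := aux_bounds (l * z) (by positivity)
    have d := Real.exp_pos (-(l * z))
    have e : 0 ≤ z ^ (-2 : ℝ) := by positivity
    rw [Real.norm_eq_abs, abs_mul, abs_of_nonneg e, abs_of_nonneg (by linarith)]
    nlinarith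

open Filter Topology in
theorem aux_lim0 (l : ℝ) (hl : 0 < l) :
    Tendsto (fun z => -((1 - Real.exp (-(l * z)) - 1 * (l * z)) / z)
      + l * (Real.exp (-(l * z)) - 1) * Real.log z) (𝓝[>] 0) (𝓝 0) := by
  have A : Tendsto (fun z : ℝ => l ^ 2 * z) (𝓝[>] 0) (𝓝 0) := by
    have : Continuous (fun z : ℝ => l ^ 2 * z) := by fun_prop
    simpa using (this.tendsto 0).mono_left nhdsWithin_le_nhds
  have B : Tendsto (fun z : ℝ => l ^ 2 * |Real.log z * z ^ (1:ℝ)|) (𝓝[>] 0) (𝓝 0) := by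
    simpa using (tendsto_log_mul_rpow_nhdsGT_zero zero_lt_one).abs.const_mul (l ^ 2)
  have C := A.add B
  rw [add_zero] at C
  refine squeeze_zero_norm' ?_ C
  filter_upwards [self_mem_nhdsWithin] with z hz
  have hz0 : 0 < z := hz
  obtain ⟨a, b, c⟩ := aux_bounds (l * z) (by positivity)
  refine (norm_add_le _ _).trans (add_le_add ?_ ?_)
  · rw [norm_neg, Real.norm_eq_abs, abs_div, abs_of_nonpos (by linarith),
      abs_of_nonneg hz0.le, div_le_iff₀ (by positivity)]
    nlinarith
  · rw [Real.rpow_one, Real.norm_eq_abs, abs_mul, abs_mul, abs_mul, abs_of_pos hl, abs_of_pos hz0,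
      abs_of_nonpos (by linarith : Real.exp (-(l * z)) - 1 ≤ 0)]
    have := mul_le_mul_of_nonneg_right (by linarith : -(Real.exp (-(l * z)) - 1) ≤ l * z)
      (by positivity : 0 ≤ l * |Real.log z|)
    linarith

open Filter Topology in
theorem aux_lim1 (l : ℝ) (hl : 0 < l) :
    Tendsto (fun z => -((1 - Real.exp (-(l * z)) - 0 * (l * z)) / z)
      + l * (Real.exp (-(l * z)) - 0) * Real.log z) atTop (𝓝 0) := by
  have A : Tendsto (fun z : ℝ => z⁻¹) atTop (𝓝 0) := tendsto_inv_atTop_zero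
  have B : Tendsto (fun z : ℝ => Real.log z / z) atTop (𝓝 0) :=
    Real.isLittleO_log_id_atTop.tendsto_div_nhds_zero
  have C := A.add B
  rw [add_zero] at C
  refine squeeze_zero_norm' ?_ C
  filter_upwards [eventually_ge_atTop 1] with z hz
  have hz0 : 0 < z := by linarith
  obtain ⟨a, b, c⟩ := aux_bounds (l * z) (by positivity)
  have d := Real.exp_pos (-(l * z))
  refine (norm_add_le _ _).trans (add_le_add ?_ ?_)
  · rw [norm_neg, Real.norm_eq_abs, abs_div, abs_of_nonneg (by linarith),
      abs_of_nonneg hz0.le, div_le_iff₀ (by positivity), inv_mul_cancel₀ hz0.ne']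
    linarith
  · have e := Real.log_nonneg hz
    rw [sub_zero, Real.norm_eq_abs, abs_of_nonneg (by positivity), le_div_iff₀ hz0]
    have f : Real.exp (-(l * z)) * Real.exp (l * z) = 1 := by rw [← Real.exp_add]; simp
    have g := Real.add_one_le_exp (l * z)
    have : Real.exp (-(l * z)) * (l * z) ≤ 1 := by nlinarith
    nlinarith


/-- The Laplace exponent computation for the spectrally positive stable-1 law:
for `λ, ρ > 0`, the function `z ↦ (1 − e^{−λz} − λz·1_{z≤ρ})·z^{−2}` is integrable on
`(0,∞)` and its integral equals `−λ log λ − (log ρ − 1 + γ)·λ`, where `γ` is the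
Euler–Mascheroni constant. -/
theorem stable_one_laplace_exponent (l ρ : ℝ) (hl : 0 < l) (hρ : 0 < ρ) :
    IntegrableOn
      (fun z : ℝ => (1 - Real.exp (-(l * z)) - (if z ≤ ρ then l * z else 0)) * z ^ (-2 : ℝ))
      (Ioi 0) volume ∧
    ∫ z in Ioi (0 : ℝ),
        (1 - Real.exp (-(l * z)) - (if z ≤ ρ then l * z else 0)) * z ^ (-2 : ℝ)
      = -(l * Real.log l) - (Real.log ρ - 1 + Real.eulerMascheroniConstant) * l := by
  set f : ℝ → ℝ := fun z : ℝ =>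
    (1 - Real.exp (-(l * z)) - (if z ≤ ρ then l * z else 0)) * z ^ (-2 : ℝ) with hf
  obtain ⟨s1, s2⟩ := aux_scaled l hl
  have hu : Ioc 0 ρ ∪ Ioi ρ = Ioi 0 := Ioc_union_Ioi_eq_Ioi hρ.le
  have hd : Disjoint (Ioc 0 ρ) (Ioi ρ) := Ioc_disjoint_Ioi le_rfl
  have s10 := s1.mono_set (hu ▸ subset_union_left : Ioc 0 ρ ⊆ Ioi 0)
  have s11 := s1.mono_set (hu ▸ subset_union_right : Ioi ρ ⊆ Ioi 0)
  have e0 : ∀ z ∈ Ioc 0 ρ, (1 - Real.exp (-(l * z)) - 1 * (l * z)) * z ^ (-2 : ℝ) = f z := by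
    intro z hz
    simp [hf, hz.2]
  have e1 : ∀ z ∈ Ioi ρ, (1 - Real.exp (-(l * z)) - 0 * (l * z)) * z ^ (-2 : ℝ) = f z := by
    intro z hz
    have : ¬ z ≤ ρ := not_le.2 hz
    simp [hf, this]
  have i0 := aux_int0 l ρ hl
  have i1 := aux_int1 l ρ hl hρ
  have f0 : IntegrableOn f (Ioc 0 ρ) volume := i0.congr_fun e0 measurableSet_Ioc
  have f1 : IntegrableOn f (Ioi ρ) volume := i1.congr_fun e1 measurableSet_Ioi
  refine ⟨hu ▸ f0.union f1, ?_⟩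
  rw [← hu, setIntegral_union hd measurableSet_Ioi s10 s11] at s2
  rw [← hu, setIntegral_union hd measurableSet_Ioi f0 f1,
    ← setIntegral_congr_fun measurableSet_Ioc e0, ← setIntegral_congr_fun measurableSet_Ioi e1]
  have J0 := intervalIntegral.integral_eq_sub_of_hasDerivAt_of_tendsto hρ
    (fun z hz => aux_deriv l z 1 hz.1)
    ((intervalIntegrable_iff_integrableOn_Ioc_of_le hρ.le).2 (i0.sub s10)) (aux_lim0 l hl)
    ((aux_deriv l ρ 1 hρ).continuousAt.tendsto.mono_left nhdsWithin_le_nhds)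
  have J1 := integral_Ioi_of_hasDerivAt_of_tendsto'
    (fun z (hz : z ∈ Ici ρ) => aux_deriv l z 0 (hρ.trans_le hz)) (i1.sub s11) (aux_lim1 l hl)
  rw [intervalIntegral.integral_of_le hρ.le, integral_sub i0 s10] at J0
  rw [integral_sub i1 s11] at J1
  have R : -((1 - Real.exp (-(l * ρ)) - 1 * (l * ρ)) / ρ)
      = -((1 - Real.exp (-(l * ρ)) - 0 * (l * ρ)) / ρ) + l := by
    field_simp
    ring
  rw [R] at J0
  linarith
end

section
/- For every ρ > 0, the function I : (0,∞) → ℝ defined by I(λ) := ∫₀^∞ (1 − e^{−λz} − λz·1_{z≤ρ}) z^{−2} dz is twice differentiable on (0,∞), and I''(λ) = −1/λ for every λ > 0. -/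
open MeasureTheory Real Set

/-- The integral `I(λ) = ∫₀^∞ (1 − e^{−λz} − λz·1_{z≤ρ}) z^{−2} dz`. -/
noncomputable def stableIntegral (ρ : ℝ) (l : ℝ) : ℝ :=
  ∫ z in Ioi (0 : ℝ),
    (1 - Real.exp (-(l * z)) - (if z ≤ ρ then l * z else 0)) * z ^ (-2 : ℝ)

lemma si_exp_int (b C : ℝ) (hb : 0 < b) :
    Integrable (fun z : ℝ => C * Real.exp (-b * z)) (volume.restrict (Ioi 0)) :=
  (exp_neg_integrableOn_Ioi 0 hb).const_mul C

lemma si_rpow (z : ℝ) (hz : 0 < z) : z ^ (-2 : ℝ) = (z ^ 2)⁻¹ := by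
  rw [Real.rpow_neg hz.le]; norm_cast

lemma si_meas0 (ρ l : ℝ) : Measurable (fun z : ℝ =>
    (1 - Real.exp (-(l * z)) - (if z ≤ ρ then l * z else 0)) * z ^ (-2 : ℝ)) := by
  have : Measurable (fun z : ℝ => if z ≤ ρ then l * z else 0) :=
    Measurable.ite measurableSet_Iic (by fun_prop) (by fun_prop)
  fun_prop

lemma si_meas1 (ρ l : ℝ) : Measurable (fun z : ℝ =>
    (Real.exp (-(l * z)) - (if z ≤ ρ then 1 else 0)) * z⁻¹) := by
  have : Measurable (fun z : ℝ => if z ≤ ρ then (1:ℝ) else 0) :=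
    Measurable.ite measurableSet_Iic (by fun_prop) (by fun_prop)
  fun_prop

lemma si_int0 (ρ l : ℝ) (hρ : 0 < ρ) (hl : 0 < l) : Integrable (fun z : ℝ =>
    (1 - Real.exp (-(l * z)) - (if z ≤ ρ then l * z else 0)) * z ^ (-2 : ℝ))
    (volume.restrict (Ioi 0)) := by
  have h : Ioi (0:ℝ) = Ioc 0 ρ ∪ Ioi ρ := (Ioc_union_Ioi_eq_Ioi hρ.le).symm
  change IntegrableOn _ _ _
  rw [h]
  apply IntegrableOn.union
  · have hc : IntegrableOn (fun _ : ℝ => l ^ 2) (Ioc 0 ρ) := by simp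
    refine Integrable.mono' hc (si_meas0 ρ l).aestronglyMeasurable ?_
    refine (ae_restrict_iff' measurableSet_Ioc).2 (ae_of_all _ fun z hz => ?_)
    have hy : 0 < l * z := mul_pos hl hz.1
    rw [if_pos hz.2, si_rpow z hz.1, norm_mul, Real.norm_eq_abs, Real.norm_eq_abs,
      abs_of_pos (by have := hz.1; positivity : 0 < (z ^ 2)⁻¹), ← div_eq_mul_inv,
      div_le_iff₀ (by have := hz.1; positivity)]
    have h1 := Real.add_one_le_exp (-(l * z))
    have h2 : Real.exp (-(l * z)) * (1 + l * z) ≤ 1 := by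
      have := Real.add_one_le_exp (l * z)
      rw [Real.exp_neg, inv_mul_le_iff₀ (Real.exp_pos _)]; linarith
    have h3 : Real.exp (-(l * z)) ≤ 1 - l * z + (l * z) ^ 2 := by
      by_contra hh
      push Not at hh
      have := mul_lt_mul_of_pos_right hh (by linarith : 0 < 1 + l * z)
      nlinarith [pow_pos hy 3]
    rw [abs_le]; constructor <;> nlinarith
  · have hc := integrableOn_Ioi_rpow_of_lt (by norm_num : (-2:ℝ) < -1) hρ
    refine Integrable.mono' hc (si_meas0 ρ l).aestronglyMeasurable ?_
    refine (ae_restrict_iff' measurableSet_Ioi).2 (ae_of_all _ fun z hz => ?_)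
    have hz : ρ < z := hz
    have hz0 : 0 < z := hρ.trans hz
    have hp : 0 < z ^ (-2:ℝ) := Real.rpow_pos_of_pos hz0 _
    rw [if_neg (not_le.2 hz), norm_mul, Real.norm_eq_abs, Real.norm_eq_abs, abs_of_pos hp]
    have h1 : Real.exp (-(l * z)) ≤ 1 := Real.exp_le_one_iff.2 (by nlinarith)
    have h2 := Real.exp_pos (-(l * z))
    apply mul_le_of_le_one_left hp.le
    rw [abs_le]; constructor <;> linarith

lemma si_bound1 (ρ l x z : ℝ) (hρ : 0 < ρ) (hl : 0 < l) (hx : l / 2 < x) (hx2 : x < 2 * l)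
    (hz : 0 < z) : ‖(Real.exp (-(x * z)) - (if z ≤ ρ then 1 else 0)) * z⁻¹‖ ≤
      (2 * l * Real.exp (l / 2 * ρ) + 1 / ρ) * Real.exp (-(l / 2) * z) := by
  have hx0 : 0 < x := by linarith
  have hxz := mul_pos hx0 hz
  have he := Real.exp_pos (-(l / 2) * z)
  have hi : 0 < z⁻¹ := inv_pos.2 hz
  rw [norm_mul, Real.norm_eq_abs, Real.norm_eq_abs, abs_of_pos hi, add_mul]
  split_ifs with h
  · have h1 := Real.add_one_le_exp (-(x * z))
    have h2 : Real.exp (-(x * z)) ≤ 1 := Real.exp_le_one_iff.2 (by linarith)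
    have h3 : 1 ≤ Real.exp (l / 2 * ρ) * Real.exp (-(l / 2) * z) := by
      rw [← Real.exp_add]; apply Real.one_le_exp; nlinarith
    have h4 : |Real.exp (-(x * z)) - 1| * z⁻¹ ≤ 2 * l := by
      rw [← div_eq_mul_inv, div_le_iff₀ hz, abs_le]; constructor <;> nlinarith
    have h5 : 0 < 1 / ρ * Real.exp (-(l / 2) * z) := by positivity
    nlinarith
  · push Not at h
    rw [sub_zero, abs_of_pos (Real.exp_pos _)]
    have h1 : Real.exp (-(x * z)) ≤ Real.exp (-(l / 2) * z) := Real.exp_le_exp.2 (by nlinarith)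
    have h2 : z⁻¹ ≤ 1 / ρ := by rw [one_div]; exact inv_anti₀ hρ h.le
    have h3 : Real.exp (-(x * z)) * z⁻¹ ≤ Real.exp (-(l / 2) * z) * (1 / ρ) := by gcongr
    have h5 : 0 < 2 * l * Real.exp (l / 2 * ρ) * Real.exp (-(l / 2) * z) := by positivity
    linarith

lemma si_deriv1 (ρ l : ℝ) (hρ : 0 < ρ) (hl : 0 < l) : HasDerivAt (stableIntegral ρ)
    (∫ z in Ioi (0:ℝ), (Real.exp (-(l * z)) - (if z ≤ ρ then 1 else 0)) * z⁻¹) l := by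
  refine (hasDerivAt_integral_of_dominated_loc_of_deriv_le
    (F := fun l z => (1 - Real.exp (-(l * z)) - (if z ≤ ρ then l * z else 0)) * z ^ (-2 : ℝ))
    (F' := fun l z => (Real.exp (-(l * z)) - (if z ≤ ρ then 1 else 0)) * z⁻¹)
    (bound := fun z => (2 * l * Real.exp (l / 2 * ρ) + 1 / ρ) * Real.exp (-(l / 2) * z))
    (s := Ioo (l / 2) (2 * l)) (Ioo_mem_nhds (by linarith) (by linarith))
    (Filter.Eventually.of_forall fun x => (si_meas0 ρ x).aestronglyMeasurable)
    (si_int0 ρ l hρ hl) (si_meas1 ρ l).aestronglyMeasurable ?_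
    (si_exp_int _ _ (by linarith)) ?_).2
  · exact (ae_restrict_iff' measurableSet_Ioi).2 (ae_of_all _ fun z hz x hx =>
      si_bound1 ρ l x z hρ hl hx.1 hx.2 hz)
  · refine (ae_restrict_iff' measurableSet_Ioi).2 (ae_of_all _ fun z hz x hx => ?_)
    have hz : 0 < z := hz
    have hm : HasDerivAt (fun x : ℝ => x * z) z x := hasDerivAt_mul_const z
    have h2 : HasDerivAt (fun x : ℝ => if z ≤ ρ then x * z else 0) (if z ≤ ρ then z else 0) x := by
      split_ifs
      · exact hm
      · exact hasDerivAt_const _ _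
    have := ((hm.neg.exp.const_sub 1).sub h2).mul_const (z ^ (-2:ℝ))
    refine this.congr_deriv ?_
    rw [si_rpow z hz]
    split_ifs <;> simp <;> field_simp

lemma si_deriv2 (ρ l : ℝ) (hρ : 0 < ρ) (hl : 0 < l) : HasDerivAt (fun l =>
    (∫ z in Ioi (0:ℝ), (Real.exp (-(l * z)) - (if z ≤ ρ then 1 else 0)) * z⁻¹)) (-1 / l) l := by
  have hv : ∫ z in Ioi (0:ℝ), -Real.exp (-(l * z)) = -1 / l := by
    have := integral_exp_mul_Ioi (neg_lt_zero.2 hl) 0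
    simp only [neg_mul] at this
    rw [integral_neg, this]; simp [neg_div]
  rw [← hv]
  refine (hasDerivAt_integral_of_dominated_loc_of_deriv_le
    (F := fun l z => (Real.exp (-(l * z)) - (if z ≤ ρ then 1 else 0)) * z⁻¹)
    (F' := fun l z => -Real.exp (-(l * z)))
    (bound := fun z => 1 * Real.exp (-(l / 2) * z))
    (s := Ioo (l / 2) (2 * l)) (Ioo_mem_nhds (by linarith) (by linarith))
    (Filter.Eventually.of_forall fun x => (si_meas1 ρ x).aestronglyMeasurable)
    ?_ (by fun_prop) ?_
    (si_exp_int _ _ (by linarith)) ?_).2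
  · refine Integrable.mono' (si_exp_int (l / 2) (2 * l * Real.exp (l / 2 * ρ) + 1 / ρ)
      (by linarith)) (si_meas1 ρ l).aestronglyMeasurable ?_
    exact (ae_restrict_iff' measurableSet_Ioi).2 (ae_of_all _ fun z hz =>
      si_bound1 ρ l l z hρ hl (by linarith) (by linarith) hz)
  · refine (ae_restrict_iff' measurableSet_Ioi).2 (ae_of_all _ fun z hz x hx => ?_)
    have hz : 0 < z := hz
    rw [norm_neg, Real.norm_eq_abs, abs_of_pos (Real.exp_pos _), one_mul]
    exact Real.exp_le_exp.2 (by nlinarith [hx.1])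
  · refine (ae_restrict_iff' measurableSet_Ioi).2 (ae_of_all _ fun z hz x hx => ?_)
    have hz : 0 < z := hz
    have hm : HasDerivAt (fun x : ℝ => x * z) z x := hasDerivAt_mul_const z
    have := (hm.neg.exp.sub_const (if z ≤ ρ then 1 else 0)).mul_const (z⁻¹)
    refine this.congr_deriv ?_
    simp
    field_simp

/-- Differentiation under the integral: for every `ρ > 0`, the function
`I(λ) = ∫₀^∞ (1 − e^{−λz} − λz·1_{z≤ρ}) z^{−2} dz` is twice differentiable on `(0,∞)`
and `I''(λ) = −1/λ` there. -/
theorem stableIntegral_second_deriv (ρ : ℝ) (hρ : 0 < ρ) :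
    DifferentiableOn ℝ (stableIntegral ρ) (Ioi 0) ∧
    DifferentiableOn ℝ (deriv (stableIntegral ρ)) (Ioi 0) ∧
    ∀ l : ℝ, 0 < l → deriv (deriv (stableIntegral ρ)) l = -1 / l := by
  have key : ∀ l : ℝ, 0 < l → HasDerivAt (deriv (stableIntegral ρ)) (-1 / l) l := by
    intro l hl
    refine (si_deriv2 ρ l hρ hl).congr_of_eventuallyEq ?_
    filter_upwards [Ioi_mem_nhds hl] with x hx
    exact (si_deriv1 ρ x hρ hx).deriv
  exact ⟨fun l hl => (si_deriv1 ρ l hρ hl).differentiableAt.differentiableWithinAt,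
    fun l hl => (key l hl).differentiableAt.differentiableWithinAt,
    fun l hl => (key l hl).deriv⟩
end
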